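/- Let S be a finite nonempty set, let 𝒞 be a finite family of subsets of S whose union is S, and let k be an integer with 1 ≤ k ≤ |𝒞|. Define the simple graph G whose vertex set is the disjoint union of 𝒞, S, a vertex v, and a set P of k+1 further vertices, with edges: A ∈ 𝒞 is adjacent to s ∈ S if and only if s ∈ A; v is adjacent to every A ∈ 𝒞; and v is adjacent to every p ∈ P (there are no other edges). Then G has a dominating set D whose induced subgraph is a star with exactly k leaves (i.e., D = {z} ∪ L with |L| = k, z ∉ L, z adjacent in G to every vertex of L, and the vertices of L pairwise non-adjacent in G) if and only if there exist at most k members of 𝒞 whose union is S. -/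

import Mathlib

/-!
In the construction, a dominating star `D` with `k` leaves has `k + 1` vertices. It must contain the
special vertex `v`: otherwise every one of the `k + 1` pendant vertices lies in `D`, so `D` consists
of pairwise non-adjacent pendant vertices, which is not a star with `k ≥ 1` leaves. Hence at
most `k` members of `𝒞` lie in `D`, and they cover `S`: an element `s ∉ D` is adjacent to a vertex
of `D`, while an element `s ∈ D` is a leaf (the centre `s` is not adjacent to `v ∈ D`), so it is
adjacent to the centre; in both cases the neighbour is a member of `𝒞` containing `s`.

Conversely, a cover by at most `k` sets extends to one by exactly `k ≤ |𝒞|` sets, and `v` together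
with these sets is a dominating star with centre `v`.
-/

/-- Vertex type of the graph built from a set-cover instance: subsets in `𝒞`,
elements of `S`, a special vertex `v` (the `Unit`), and `k+1` pendant vertices. -/
abbrev CoverVertex {α : Type*} (S : Finset α) (𝒞 : Finset (Finset α)) (k : ℕ) :=
  {A // A ∈ 𝒞} ⊕ {s // s ∈ S} ⊕ Unit ⊕ Fin (k + 1)

/-- The graph of the reduction: `A ∈ 𝒞` is adjacent to `s ∈ S` iff `s ∈ A`;
the special vertex `v` is adjacent to every `A ∈ 𝒞` and to every pendant vertex;
there are no other edges. -/
def coverGraph {α : Type*} (S : Finset α) (𝒞 : Finset (Finset α)) (k : ℕ) :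
    SimpleGraph (CoverVertex S 𝒞 k) :=
  SimpleGraph.fromRel (fun x y =>
    (∃ (A : {A // A ∈ 𝒞}) (s : {s // s ∈ S}),
        x = Sum.inl A ∧ y = Sum.inr (Sum.inl s) ∧ (s : α) ∈ (A : Finset α)) ∨
    (∃ A : {A // A ∈ 𝒞},
        x = Sum.inr (Sum.inr (Sum.inl ())) ∧ y = Sum.inl A) ∨
    (∃ p : Fin (k + 1),
        x = Sum.inr (Sum.inr (Sum.inl ())) ∧ y = Sum.inr (Sum.inr (Sum.inr p))))

section

variable {α : Type*} {S : Finset α} {𝒞 : Finset (Finset α)} {k : ℕ}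

/-- The neighbours of an element vertex `s` are the sets of the family containing `s`. -/
lemma coverGraph_adj_elem {s : {s // s ∈ S}} {y : CoverVertex S 𝒞 k} :
    (coverGraph S 𝒞 k).Adj (Sum.inr (Sum.inl s)) y ↔
      ∃ A : {A // A ∈ 𝒞}, y = Sum.inl A ∧ (s : α) ∈ (A : Finset α) := by
  rcases y with A | t | u | p <;> simp [coverGraph, SimpleGraph.fromRel_adj]

/-- The only neighbour of a pendant vertex is the special vertex. -/
lemma coverGraph_adj_pendant {p : Fin (k + 1)} {y : CoverVertex S 𝒞 k} :
    (coverGraph S 𝒞 k).Adj (Sum.inr (Sum.inr (Sum.inr p))) y ↔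
      y = Sum.inr (Sum.inr (Sum.inl ())) := by
  rcases y with A | t | u | q <;> simp [coverGraph, SimpleGraph.fromRel_adj]

lemma coverGraph_adj_special_set (A : {A // A ∈ 𝒞}) :
    (coverGraph S 𝒞 k).Adj (Sum.inr (Sum.inr (Sum.inl ()))) (Sum.inl A) := by
  simp [coverGraph, SimpleGraph.fromRel_adj]

lemma coverGraph_not_adj_set_set (A B : {A // A ∈ 𝒞}) :
    ¬ (coverGraph S 𝒞 k).Adj (Sum.inl A) (Sum.inl B) := by
  simp [coverGraph, SimpleGraph.fromRel_adj]

/-- A dominating star with `k ≥ 1` leaves contains the special vertex: otherwise it would contain,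
hence equal, the set of the `k + 1` pendant vertices, which is independent. -/
lemma special_mem_of_star [DecidableEq α] (hk1 : 1 ≤ k) {z : CoverVertex S 𝒞 k}
    {L : Finset (CoverVertex S 𝒞 k)} (hz : z ∉ L) (hL : L.card = k)
    (hadj : ∀ l ∈ L, (coverGraph S 𝒞 k).Adj z l)
    (hdom : ∀ x : CoverVertex S 𝒞 k, x ∉ insert z L →
      ∃ y ∈ insert z L, (coverGraph S 𝒞 k).Adj x y) :
    (Sum.inr (Sum.inr (Sum.inl ())) : CoverVertex S 𝒞 k) ∈ insert z L := by
  by_contra hv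
  let f : Fin (k + 1) → CoverVertex S 𝒞 k := fun p => Sum.inr (Sum.inr (Sum.inr p))
  have hf : Function.Injective f := fun p q h => by simpa [f] using h
  have hsub : Finset.univ.image f ⊆ insert z L := by
    intro x hx
    obtain ⟨p, -, rfl⟩ := Finset.mem_image.1 hx
    by_contra hp
    obtain ⟨y, hy, hpy⟩ := hdom _ hp
    exact hv (coverGraph_adj_pendant.1 hpy ▸ hy)
  have heq : Finset.univ.image f = insert z L := by
    refine Finset.eq_of_subset_of_card_le hsub ?_
    rw [Finset.card_insert_of_notMem hz, hL, Finset.card_image_of_injective _ hf]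
    simp
  obtain ⟨l, hl⟩ : L.Nonempty := Finset.card_pos.1 (by omega)
  obtain ⟨p, -, hp⟩ := Finset.mem_image.1 (heq ▸ Finset.mem_insert_self z L)
  have h := hadj l hl
  rw [← hp] at h
  exact hv (coverGraph_adj_pendant.1 h ▸ Finset.mem_insert_of_mem hl)

end

/-- the graph of the reduction has a dominating set inducing a star with
exactly `k` leaves iff there are at most `k` members of `𝒞` whose union is `S`. -/
theorem stmt8 {α : Type*} [DecidableEq α]
    (S : Finset α) (hS : S.Nonempty)
    (𝒞 : Finset (Finset α)) (hsub : ∀ A ∈ 𝒞, A ⊆ S)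
    (hcover : ∀ s ∈ S, ∃ A ∈ 𝒞, s ∈ A)
    (k : ℕ) (hk1 : 1 ≤ k) (hk2 : k ≤ 𝒞.card) :
    (∃ (z : CoverVertex S 𝒞 k) (L : Finset (CoverVertex S 𝒞 k)),
      z ∉ L ∧ L.card = k ∧
      (∀ l ∈ L, (coverGraph S 𝒞 k).Adj z l) ∧
      (∀ l ∈ L, ∀ l' ∈ L, l ≠ l' → ¬ (coverGraph S 𝒞 k).Adj l l') ∧
      (∀ x : CoverVertex S 𝒞 k, x ∉ insert z L →
        ∃ y ∈ insert z L, (coverGraph S 𝒞 k).Adj x y)) ↔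
    (∃ 𝒟 : Finset (Finset α), 𝒟 ⊆ 𝒞 ∧ 𝒟.card ≤ k ∧ ∀ s ∈ S, ∃ A ∈ 𝒟, s ∈ A) := by
  constructor
  · rintro ⟨z, L, hz, hL, hadj, -, hdom⟩
    have hv := special_mem_of_star hk1 hz hL hadj hdom
    refine ⟨(𝒞.attach.filter fun A => Sum.inl A ∈ insert z L).image Subtype.val, ?_, ?_, ?_⟩
    · intro A hA
      obtain ⟨B, -, rfl⟩ := Finset.mem_image.1 hA
      exact B.2
    · refine Finset.card_image_le.trans ?_
      have hcard : ((insert z L).erase (Sum.inr (Sum.inr (Sum.inl ())))).card = k := by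
        rw [Finset.card_erase_of_mem hv, Finset.card_insert_of_notMem hz, hL]
        rfl
      refine le_trans ?_ hcard.le
      refine Finset.card_le_card_of_injOn Sum.inl ?_ Sum.inl_injective.injOn
      intro A hA
      exact Finset.mem_erase.2 ⟨by simp, (Finset.mem_filter.1 hA).2⟩
    · intro s hs
      obtain ⟨y, hy, hsy⟩ : ∃ y ∈ insert z L,
          (coverGraph S 𝒞 k).Adj (Sum.inr (Sum.inl ⟨s, hs⟩)) y := by
        by_cases hsD : Sum.inr (Sum.inl ⟨s, hs⟩) ∈ insert z L
        · rcases Finset.mem_insert.1 hsD with rfl | hsL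
          -- If `s` were the centre, then `v` would be a leaf, hence adjacent to `s`;
          -- `v` then serves as `y`, although this case cannot occur.
          · rcases Finset.mem_insert.1 hv with h | h
            · simp at h
            · exact ⟨_, hv, hadj _ h⟩
          · exact ⟨z, Finset.mem_insert_self _ _, (hadj _ hsL).symm⟩
        · exact hdom _ hsD
      obtain ⟨A, rfl, hsA⟩ := coverGraph_adj_elem.1 hsy
      exact ⟨A, Finset.mem_image_of_mem _
        (Finset.mem_filter.2 ⟨Finset.mem_attach _ _, hy⟩), hsA⟩
  · rintro ⟨𝒟, hsub𝒟, hcard, hcov⟩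
    obtain ⟨ℰ, hDE, hEC, hE⟩ := Finset.exists_subsuperset_card_eq hsub𝒟 hcard hk2
    let f : {A // A ∈ ℰ} → CoverVertex S 𝒞 k := fun A => Sum.inl ⟨A, hEC A.2⟩
    have hf : Function.Injective f := fun A B h => by
      have h' : (⟨A, hEC A.2⟩ : {A // A ∈ 𝒞}) = ⟨B, hEC B.2⟩ := Sum.inl_injective h
      exact Subtype.ext (congrArg (fun x : {A // A ∈ 𝒞} => (x : Finset α)) h')
    refine ⟨Sum.inr (Sum.inr (Sum.inl ())), ℰ.attach.image f, ?_, ?_, ?_, ?_, ?_⟩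
    · intro h
      obtain ⟨A, -, hA⟩ := Finset.mem_image.1 h
      exact Sum.inl_ne_inr hA
    · rw [Finset.card_image_of_injective _ hf, Finset.card_attach, hE]
    · intro l hl
      obtain ⟨A, -, rfl⟩ := Finset.mem_image.1 hl
      exact coverGraph_adj_special_set _
    · intro l hl l' hl' _
      obtain ⟨A, -, rfl⟩ := Finset.mem_image.1 hl
      obtain ⟨B, -, rfl⟩ := Finset.mem_image.1 hl'
      exact coverGraph_not_adj_set_set _ _
    · rintro (A | s | u | p) hx
      · exact ⟨_, Finset.mem_insert_self _ _, (coverGraph_adj_special_set A).symm⟩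
      · obtain ⟨A, hA, hsA⟩ := hcov s s.2
        exact ⟨f ⟨A, hDE hA⟩,
          Finset.mem_insert_of_mem (Finset.mem_image_of_mem _ (Finset.mem_attach _ _)),
          coverGraph_adj_elem.2 ⟨_, rfl, hsA⟩⟩
      · exact absurd (Finset.mem_insert_self _ _) hx
      · exact ⟨_, Finset.mem_insert_self _ _, coverGraph_adj_pendant.2 rfl⟩
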